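/- Let β > 2, ρ > 0, and α_N = N^{−ρ}. For any κ with 0 < κ < 1/2 and 2κ < ρ, the Gibbs measure of the complement of the typical set vanishes: μ_{N,α_N,β}((m₁(σ), m₂(σ)) ∉ A_κ^N) → 0 as N → ∞ through even integers. -/

import Mathlib

/-!
The tangent-line bound `m² ≥ 2 x m - x²` (the quadratic term of the Hubbard–Stratonovich
transform) compares one Curie–Weiss block of size `n` with independent spins, and shows that a
magnetization `y` has probability at most `exp (n (G y - G x))`, where
`G m = log (2 cosh (γ m)) - γ m² / 2`. Since `tanh t / t` decreases on bounded intervals at least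
as fast as a multiple of `t²` grows, `G` falls off like `(m² - m₊²)²` around its maximizers `± m₊`.
Leaving the `δ`-windows around them thus costs a factor `exp (-c n δ²)`, against which the `n + 1`
possible values of the magnetization are negligible when `δ = N ^ (-κ)` and `κ < 1 / 2`.
The interaction between the blocks is at most `|α| n` in absolute value, hence changes
probabilities by a factor at most `exp (2 |α| n)`, which is negligible as well as soon as
`α = o(N ^ (-2κ)) = o(δ²)`.
-/

open MeasureTheory Filter

noncomputable section

/-- The spin value ±1 associated to a Boolean. -/
def spinVal (s : Bool) : ℝ := if s then 1 else -1

/-- A spin configuration on `N = 2n` sites, split into the two blocks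
`B₁` (first component) and `B₂` (second component); the perfect matching
pairs the `i`-th spin of `B₁` with the `i`-th spin of `B₂`. -/
abbrev TwoConf (n : ℕ) := (Fin n → Bool) × (Fin n → Bool)

/-- Block magnetization `m₁(σ) = (2/N) ∑_{i ∈ B₁} σᵢ` with `N = 2n`. -/
def mag1 (n : ℕ) (σ : TwoConf n) : ℝ := (2 / (2 * n : ℝ)) * ∑ i, spinVal (σ.1 i)

/-- Block magnetization `m₂(σ) = (2/N) ∑_{i ∈ B₂} σᵢ` with `N = 2n`. -/
def mag2 (n : ℕ) (σ : TwoConf n) : ℝ := (2 / (2 * n : ℝ)) * ∑ i, spinVal (σ.2 i)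

/-- The Hamiltonian
`H_{N,α,β}(σ) = −(β/(2N))(∑_{i,j∈B₁} σᵢσⱼ + ∑_{i,j∈B₂} σᵢσⱼ) − α ∑_{i∈B₁} σᵢ σ_{i+N/2}`
with `N = 2n`. -/
def twoH (n : ℕ) (α β : ℝ) (σ : TwoConf n) : ℝ :=
  -(β / (2 * (2 * n : ℝ))) *
      ((∑ i, ∑ j, spinVal (σ.1 i) * spinVal (σ.1 j)) +
        ∑ i, ∑ j, spinVal (σ.2 i) * spinVal (σ.2 j))
    - α * ∑ i, spinVal (σ.1 i) * spinVal (σ.2 i)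

/-- The distribution of the magnetization vector `(m₁, m₂)` under the Gibbs measure
`μ_{N,α,β}`, i.e. the pushforward of the Gibbs measure under `σ ↦ (m₁(σ), m₂(σ))`. -/
def twoMagDist (n : ℕ) (α β : ℝ) : Measure (ℝ × ℝ) :=
  (∑ σ : TwoConf n, ENNReal.ofReal (Real.exp (-twoH n α β σ)))⁻¹ •
    ∑ σ : TwoConf n,
      ENNReal.ofReal (Real.exp (-twoH n α β σ)) • Measure.dirac (mag1 n σ, mag2 n σ)

/-- Membership in the typical set `A_κ^N ⊆ [−1,1]²`: the union over sign choices
`s₁, s₂ ∈ {+,−}` of the open squares of half-width `N^{−κ}` centered at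
`(m^{s₁}(β/2), m^{s₂}(β/2))`, where `mp = m⁺(β/2)` and `m⁻(β/2) = −mp`. -/
def memTyp (mp κ : ℝ) (N : ℕ) (x : ℝ × ℝ) : Prop :=
  ∃ s₁ s₂ : Bool,
    |x.1 - (if s₁ then mp else -mp)| < (N : ℝ) ^ (-κ) ∧
    |x.2 - (if s₂ then mp else -mp)| < (N : ℝ) ^ (-κ)

open Real Set Asymptotics
open scoped Topology

section TanhEstimates

lemma one_add_sq_div_two_le_cosh (x : ℝ) : 1 + x ^ 2 / 2 ≤ cosh x := by
  have half_angle : cosh x = 1 + 2 * sinh (x / 2) ^ 2 := by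
    rw [← mul_div_cancel₀ x two_ne_zero, mul_div_assoc, cosh_two_mul, cosh_sq]
    ring_nf
  have abs_le : |x / 2| ≤ |sinh (x / 2)| := by
    rw [abs_sinh]
    exact self_le_sinh_iff.2 (abs_nonneg _)
  have := sq_le_sq.2 abs_le
  linarith

lemma add_cube_div_six_le_sinh {x : ℝ} (hx : 0 ≤ x) : x + x ^ 3 / 6 ≤ sinh x := by
  have hderiv (y : ℝ) :
      HasDerivAt (fun y => sinh y - (y + y ^ 3 / 6)) (cosh y - (1 + y ^ 2 / 2)) y := by
    refine ((hasDerivAt_sinh y).sub ((hasDerivAt_id' y).add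
      (((hasDerivAt_id' y).pow 3).div_const 6))).congr_deriv ?_
    norm_num
    ring
  have hmono : Monotone fun y => sinh y - (y + y ^ 3 / 6) :=
    monotone_of_hasDerivAt_nonneg hderiv fun y => sub_nonneg.2 (one_add_sq_div_two_le_cosh y)
  simpa using hmono hx

lemma hasDerivAt_tanh (x : ℝ) : HasDerivAt tanh (1 / cosh x ^ 2) x := by
  have heq : tanh = sinh / cosh := funext tanh_eq_sinh_div_cosh
  rw [heq]
  refine ((hasDerivAt_sinh x).div (hasDerivAt_cosh x) (cosh_pos x).ne').congr_deriv ?_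
  rw [← sq, ← sq, cosh_sq, add_sub_cancel_left]

lemma continuous_tanh : Continuous tanh :=
  continuous_iff_continuousAt.2 fun x => (hasDerivAt_tanh x).continuousAt

lemma hasDerivAt_tanh_div_self {x : ℝ} (hx : x ≠ 0) :
    HasDerivAt (fun x => tanh x / x) ((x - sinh x * cosh x) / (cosh x * x) ^ 2) x := by
  refine ((hasDerivAt_tanh x).div (hasDerivAt_id' x) hx).congr_deriv ?_
  rw [tanh_eq_sinh_div_cosh]
  have := (cosh_pos x).ne'
  field_simp

lemma antitoneOn_tanh_div_self_add_sq (b : ℝ) :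
    AntitoneOn (fun x => tanh x / x + x ^ 2 / (3 * cosh b ^ 2)) (Ioc 0 b) := by
  have hderiv {x : ℝ} (hx : 0 < x) := (hasDerivAt_tanh_div_self hx.ne').add
    (((hasDerivAt_id' x).pow 2).div_const (3 * cosh b ^ 2))
  refine antitoneOn_of_hasDerivWithinAt_nonpos (convex_Ioc 0 b)
    (fun x hx => (hderiv hx.1).continuousAt.continuousWithinAt)
    (fun x hx => (hderiv (interior_subset hx).1).hasDerivWithinAt) fun x hx => ?_
  obtain ⟨hx0, hxb⟩ := interior_subset hx
  have hcosh_le : cosh x ≤ cosh b :=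
    cosh_le_cosh.2 (by rwa [abs_of_pos hx0, abs_of_pos (hx0.trans_le hxb)])
  have hsinh : x + 2 / 3 * x ^ 3 ≤ sinh x * cosh x := by
    have := add_cube_div_six_le_sinh (x := 2 * x) (by positivity)
    rw [sinh_two_mul] at this
    linarith
  have hslope : (x - sinh x * cosh x) / (cosh x * x) ^ 2 ≤ -(2 * x / (3 * cosh b ^ 2)) :=
    calc (x - sinh x * cosh x) / (cosh x * x) ^ 2
        ≤ -(2 / 3 * x ^ 3) / (cosh x * x) ^ 2 := by gcongr; linarith
      _ = -(2 * x / (3 * cosh x ^ 2)) := by field_simp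
      _ ≤ -(2 * x / (3 * cosh b ^ 2)) := by gcongr
  norm_num
  linarith

lemma exists_pos_eq_tanh_mul {γ : ℝ} (hγ : 1 < γ) : ∃ z, 0 < z ∧ z = tanh (γ * z) := by
  have hγ0 : 0 < γ := one_pos.trans hγ
  -- Since `cosh t = γ` for this `t`, the bound `sinh t ≥ t` reads `tanh t ≥ t / γ`.
  set t := arcosh γ
  have ht : 0 < t := arcosh_pos hγ
  have hlow : t / γ ≤ tanh (γ * (t / γ)) := by
    rw [mul_div_cancel₀ _ hγ0.ne', tanh_eq_sinh_div_cosh, cosh_arcosh hγ.le]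
    gcongr
    exact self_le_sinh_iff.2 ht.le
  have hcont : ContinuousOn (fun z => tanh (γ * z) - z) (Icc (t / γ) 1) := by
    have := continuous_tanh
    fun_prop
  obtain ⟨z, hz, hz0⟩ := intermediate_value_Icc' (hlow.trans (tanh_lt_one _).le) hcont
    (mem_Icc.2 ⟨sub_nonpos.2 (tanh_lt_one _).le, sub_nonneg.2 hlow⟩)
  exact ⟨z, (div_pos ht hγ0).trans_le hz.1, (sub_eq_zero.1 hz0).symm⟩

end TanhEstimates

section CurieWeissPotential

variable {γ x₀ : ℝ}

/-- The Curie–Weiss potential: the exponential rate, per spin, of the tilted partition function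
`∑_τ exp (γ m ∑ᵢ τᵢ - n γ m² / 2)` of `n` spins. -/
def curieWeissPotential (γ m : ℝ) : ℝ := log (2 * cosh (γ * m)) - γ * m ^ 2 / 2

lemma curieWeissPotential_abs (γ m : ℝ) :
    curieWeissPotential γ |m| = curieWeissPotential γ m := by
  rcases abs_choice m with h | h <;> simp [curieWeissPotential, h]

lemma hasDerivAt_curieWeissPotential (γ m : ℝ) :
    HasDerivAt (curieWeissPotential γ) (γ * (tanh (γ * m) - m)) m := by
  have hcosh : 2 * cosh (γ * m) ≠ 0 := (mul_pos two_pos (cosh_pos _)).ne'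
  have hlog := ((((hasDerivAt_id' m).const_mul γ).cosh).const_mul 2).log hcosh
  refine (hlog.sub ((((hasDerivAt_id' m).pow 2).const_mul γ).div_const 2)).congr_deriv ?_
  rw [tanh_eq_sinh_div_cosh]
  have := (cosh_pos (γ * m)).ne'
  norm_num
  field_simp

lemma hasDerivAt_curieWeissPotential_add_sq (hγ : γ ≠ 0) (hx₀ : x₀ ≠ 0)
    (hfix : x₀ = tanh (γ * x₀)) (b : ℝ) {m : ℝ} (hm : m ≠ 0) :
    HasDerivAt
      (fun m => curieWeissPotential γ m + γ ^ 4 / (12 * cosh b ^ 2) * (m ^ 2 - x₀ ^ 2) ^ 2)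
      (γ ^ 2 * m * ((tanh (γ * m) / (γ * m) + (γ * m) ^ 2 / (3 * cosh b ^ 2)) -
        (tanh (γ * x₀) / (γ * x₀) + (γ * x₀) ^ 2 / (3 * cosh b ^ 2)))) m := by
  refine ((hasDerivAt_curieWeissPotential γ m).add
    (((((hasDerivAt_id' m).pow 2).sub_const (x₀ ^ 2)).pow 2).const_mul _)).congr_deriv ?_
  have := (cosh_pos b).ne'
  rw [← hfix]
  norm_num
  field_simp
  ring

lemma continuous_curieWeissPotential (γ : ℝ) : Continuous (curieWeissPotential γ) :=
  continuous_iff_continuousAt.2 fun m => (hasDerivAt_curieWeissPotential γ m).continuousAt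

lemma curieWeissPotential_add_sq_le (hγ : 0 < γ) (hx₀ : 0 < x₀) (hfix : x₀ = tanh (γ * x₀))
    {m : ℝ} (hm : |m| ≤ 1) :
    curieWeissPotential γ m + γ ^ 4 / (12 * cosh γ ^ 2) * (m ^ 2 - x₀ ^ 2) ^ 2
      ≤ curieWeissPotential γ x₀ := by
  have hx₀_le : x₀ ≤ 1 := hfix ▸ (tanh_lt_one _).le
  set L : ℝ → ℝ := fun m =>
    curieWeissPotential γ m + γ ^ 4 / (12 * cosh γ ^ 2) * (m ^ 2 - x₀ ^ 2) ^ 2 with hL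
  have hslope_anti {y z : ℝ} (hy : 0 < y) (hyz : y ≤ z) (hz : z ≤ 1) :=
    antitoneOn_tanh_div_self_add_sq γ
      ⟨mul_pos hγ hy, mul_le_of_le_one_right hγ.le (hyz.trans hz)⟩
      ⟨mul_pos hγ (hy.trans_le hyz), mul_le_of_le_one_right hγ.le hz⟩
      (mul_le_mul_of_nonneg_left hyz hγ.le)
  have hderiv {y : ℝ} (hy : 0 < y) :=
    hasDerivAt_curieWeissPotential_add_sq hγ.ne' hx₀.ne' hfix γ hy.ne'
  have hL_cont : Continuous L := by
    have := continuous_curieWeissPotential γ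
    fun_prop
  have hL_mono : MonotoneOn L (Icc 0 x₀) := by
    refine monotoneOn_of_hasDerivWithinAt_nonneg (convex_Icc 0 x₀) hL_cont.continuousOn
      (fun y hy => (hderiv (interior_Icc.subset hy).1).hasDerivWithinAt) fun y hy => ?_
    obtain ⟨hy0, hyx₀⟩ := interior_Icc.subset hy
    exact mul_nonneg (by positivity) (sub_nonneg.2 (hslope_anti hy0 hyx₀.le hx₀_le))
  have hL_anti : AntitoneOn L (Icc x₀ 1) := by
    refine antitoneOn_of_hasDerivWithinAt_nonpos (convex_Icc x₀ 1) hL_cont.continuousOn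
      (fun y hy => (hderiv (hx₀.trans (interior_Icc.subset hy).1)).hasDerivWithinAt)
      fun y hy => ?_
    obtain ⟨hx₀y, hy1⟩ := interior_Icc.subset hy
    have hy0 : 0 < y := hx₀.trans hx₀y
    exact mul_nonpos_of_nonneg_of_nonpos (by positivity)
      (sub_nonpos.2 (hslope_anti hx₀ hx₀y.le hy1.le))
  have hmax : L |m| ≤ L x₀ := by
    rcases le_total |m| x₀ with h | h
    · exact hL_mono ⟨abs_nonneg m, h⟩ ⟨hx₀.le, le_rfl⟩ h
    · exact hL_anti ⟨le_rfl, hx₀_le⟩ ⟨h, hm⟩ h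
  simpa [hL, curieWeissPotential_abs] using hmax

/-- The points within distance less than `δ` of one of the two wells `x₀` and `-x₀`; the typical
set is the square of such a neighbourhood. -/
def wellNeighbourhood (x₀ δ : ℝ) : Set ℝ := Metric.ball x₀ δ ∪ Metric.ball (-x₀) δ

lemma memTyp_iff (mp κ : ℝ) (N : ℕ) (x : ℝ × ℝ) :
    memTyp mp κ N x ↔ x.1 ∈ wellNeighbourhood mp ((N : ℝ) ^ (-κ)) ∧
      x.2 ∈ wellNeighbourhood mp ((N : ℝ) ^ (-κ)) := by
  simp only [memTyp, wellNeighbourhood, mem_union, Metric.mem_ball, dist_eq, Bool.exists_bool,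
    if_true, Bool.false_eq_true, if_false]
  tauto

lemma mul_le_abs_sq_sub_sq_of_notMem_wellNeighbourhood {δ m : ℝ} (hx₀ : 0 ≤ x₀) (hδ : 0 ≤ δ)
    (hm : m ∉ wellNeighbourhood x₀ δ) : x₀ * δ ≤ |m ^ 2 - x₀ ^ 2| := by
  simp only [wellNeighbourhood, mem_union, Metric.mem_ball, dist_eq, sub_neg_eq_add, not_or,
    not_lt] at hm
  rw [sq_sub_sq, abs_mul]
  rcases le_total 0 m with h | h
  · have hfar : x₀ ≤ |m + x₀| := (le_add_of_nonneg_left h).trans (le_abs_self _)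
    exact mul_le_mul hfar hm.1 hδ (abs_nonneg _)
  · have hfar : x₀ ≤ |m - x₀| := (by linarith : x₀ ≤ -(m - x₀)).trans (neg_le_abs _)
    rw [mul_comm]
    exact mul_le_mul hm.2 hfar hx₀ (abs_nonneg _)

lemma exists_curieWeissPotential_le_sub (hγ : 0 < γ) (hx₀ : 0 < x₀) (hfix : x₀ = tanh (γ * x₀)) :
    ∃ c, 0 < c ∧ ∀ δ, 0 ≤ δ → ∀ m ∉ wellNeighbourhood x₀ δ, |m| ≤ 1 →
      curieWeissPotential γ m ≤ curieWeissPotential γ x₀ - c * δ ^ 2 := by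
  refine ⟨γ ^ 4 / (12 * cosh γ ^ 2) * x₀ ^ 2, by positivity, fun δ hδ m hm hm1 => ?_⟩
  have hdist : x₀ ^ 2 * δ ^ 2 ≤ (m ^ 2 - x₀ ^ 2) ^ 2 := by
    rw [← mul_pow, ← sq_abs (m ^ 2 - x₀ ^ 2)]
    gcongr
    exact mul_le_abs_sq_sub_sq_of_notMem_wellNeighbourhood hx₀.le hδ hm
  calc curieWeissPotential γ m
      ≤ curieWeissPotential γ x₀ - γ ^ 4 / (12 * cosh γ ^ 2) * (m ^ 2 - x₀ ^ 2) ^ 2 :=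
        le_sub_iff_add_le.2 (curieWeissPotential_add_sq_le hγ hx₀ hfix hm1)
    _ ≤ curieWeissPotential γ x₀ - γ ^ 4 / (12 * cosh γ ^ 2) * (x₀ ^ 2 * δ ^ 2) := by gcongr
    _ = curieWeissPotential γ x₀ - γ ^ 4 / (12 * cosh γ ^ 2) * x₀ ^ 2 * δ ^ 2 := by ring

end CurieWeissPotential

section GibbsProb

variable {ι κ : Type*} [Fintype ι] [Fintype κ]

/-- The probability of `s` under the Gibbs distribution on a finite type whose weights are
`exp (h i)`; thus `h` is *minus* the Hamiltonian, inverse temperature included. -/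
def gibbsProb (h : ι → ℝ) (s : Set ι) : ℝ :=
  (∑ i, s.indicator (fun i => exp (h i)) i) / ∑ i, exp (h i)

lemma sum_exp_pos [Nonempty ι] (h : ι → ℝ) : 0 < ∑ i, exp (h i) :=
  Finset.sum_pos (fun _ _ => exp_pos _) Finset.univ_nonempty

lemma gibbsProb_mono (h : ι → ℝ) {s t : Set ι} (hst : s ⊆ t) : gibbsProb h s ≤ gibbsProb h t := by
  unfold gibbsProb
  gcongr

lemma gibbsProb_union_le (h : ι → ℝ) (s t : Set ι) :
    gibbsProb h (s ∪ t) ≤ gibbsProb h s + gibbsProb h t := by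
  unfold gibbsProb
  rw [← add_div, ← Finset.sum_add_distrib]
  gcongr with i
  rw [← Pi.add_apply, ← indicator_union_add_inter]
  exact le_add_of_nonneg_right (indicator_nonneg (fun _ _ => (exp_pos _).le) i)

lemma gibbsProb_biUnion_le {ν : Type*} (h : ι → ℝ) (F : Finset ν) (s : ν → Set ι) :
    gibbsProb h (⋃ k ∈ F, s k) ≤ ∑ k ∈ F, gibbsProb h (s k) := by
  classical
  induction F using Finset.induction_on with
  | empty => simp [gibbsProb]
  | insert k F hk ih =>
    rw [Finset.set_biUnion_insert, Finset.sum_insert hk]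
    exact (gibbsProb_union_le h _ _).trans (by gcongr)

lemma gibbsProb_le_exp_mul_gibbsProb [Nonempty ι] {h h' : ι → ℝ} {t : ℝ}
    (hh' : ∀ i, |h i - h' i| ≤ t) (s : Set ι) :
    gibbsProb h s ≤ exp (2 * t) * gibbsProb h' s := by
  have hnum : ∑ i, s.indicator (fun i => exp (h i)) i
      ≤ exp t * ∑ i, s.indicator (fun i => exp (h' i)) i := by
    rw [Finset.mul_sum]
    gcongr with i
    rw [← indicator_const_mul]
    refine indicator_le_indicator ?_
    rw [← exp_add]
    gcongr
    linarith [(abs_le.1 (hh' i)).2]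
  have hden : exp (-t) * ∑ i, exp (h' i) ≤ ∑ i, exp (h i) := by
    rw [Finset.mul_sum]
    gcongr with i
    rw [← exp_add]
    gcongr
    linarith [(abs_le.1 (hh' i)).1]
  have := sum_exp_pos h'
  calc gibbsProb h s
      ≤ (exp t * ∑ i, s.indicator (fun i => exp (h' i)) i) / (exp (-t) * ∑ i, exp (h' i)) :=
        div_le_div₀ (mul_nonneg (exp_pos _).le (Finset.sum_nonneg fun _ _ =>
          indicator_nonneg (fun _ _ => (exp_pos _).le) _)) hnum (by positivity) hden
    _ = exp (2 * t) * gibbsProb h' s := by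
        rw [mul_div_mul_comm, ← exp_sub, sub_neg_eq_add, ← two_mul, gibbsProb]

lemma gibbsProb_preimage_fst [Nonempty κ] (f : ι → ℝ) (g : κ → ℝ) (s : Set ι) :
    gibbsProb (fun p : ι × κ => f p.1 + g p.2) (Prod.fst ⁻¹' s) = gibbsProb f s := by
  have hweight (i : ι) (k : κ) : (Prod.fst ⁻¹' s).indicator
      (fun p : ι × κ => exp (f p.1) * exp (g p.2)) (i, k)
        = s.indicator (fun i => exp (f i)) i * exp (g k) := by
    by_cases hi : i ∈ s <;> simp [hi]
  simp only [gibbsProb, exp_add, Fintype.sum_prod_type, hweight, ← Fintype.sum_mul_sum]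
  exact mul_div_mul_right _ _ (sum_exp_pos g).ne'

lemma gibbsProb_preimage_snd [Nonempty ι] (f : ι → ℝ) (g : κ → ℝ) (s : Set κ) :
    gibbsProb (fun p : ι × κ => f p.1 + g p.2) (Prod.snd ⁻¹' s) = gibbsProb g s := by
  have hweight (i : ι) (k : κ) : (Prod.snd ⁻¹' s).indicator
      (fun p : ι × κ => exp (f p.1) * exp (g p.2)) (i, k)
        = exp (f i) * s.indicator (fun k => exp (g k)) k := by
    by_cases hk : k ∈ s <;> simp [hk]
  simp only [gibbsProb, exp_add, Fintype.sum_prod_type, hweight, ← Fintype.sum_mul_sum]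
  exact mul_div_mul_left _ _ (sum_exp_pos f).ne'

end GibbsProb

section CurieWeissBlock

variable {n : ℕ}

/-- The magnetization of a single block of `n` spins, equal to `0` for the empty block. -/
def blockMag (τ : Fin n → Bool) : ℝ := (∑ i, spinVal (τ i)) / n

/-- Minus the Hamiltonian of a Curie–Weiss block of `n` spins at inverse temperature `γ`. -/
def curieWeissEnergy (γ : ℝ) (τ : Fin n → Bool) : ℝ := n * (γ * blockMag τ ^ 2 / 2)

lemma abs_spinVal (b : Bool) : |spinVal b| = 1 := by
  cases b <;> simp [spinVal]

lemma natCast_mul_blockMag (τ : Fin n → Bool) : n * blockMag τ = ∑ i, spinVal (τ i) := by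
  rcases n.eq_zero_or_pos with rfl | hn
  · simp
  · exact mul_div_cancel₀ _ (Nat.cast_ne_zero.2 hn.ne')

lemma abs_blockMag_le_one (τ : Fin n → Bool) : |blockMag τ| ≤ 1 := by
  rw [blockMag, abs_div, Nat.abs_cast]
  refine div_le_one_of_le₀ ((Finset.abs_sum_le_sum_abs _ _).trans ?_) n.cast_nonneg
  simp [abs_spinVal]

lemma card_image_blockMag_le (n : ℕ) :
    (Finset.univ.image (blockMag : (Fin n → Bool) → ℝ)).card ≤ n + 1 := by
  have hspin (b : Bool) : spinVal b = 2 * (if b then 1 else 0) - 1 := by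
    cases b <;> norm_num [spinVal]
  have hsub : Finset.univ.image (blockMag : (Fin n → Bool) → ℝ)
      ⊆ (Finset.range (n + 1)).image fun k : ℕ => (2 * (k : ℝ) - n) / n := by
    refine Finset.image_subset_iff.2 fun τ _ => Finset.mem_image.2
      ⟨(Finset.univ.filter fun i => τ i).card, Finset.mem_range_succ_iff.2 ?_, ?_⟩
    · exact (Finset.card_filter_le _ _).trans_eq (Finset.card_fin n)
    · simp only [blockMag, hspin, Finset.sum_sub_distrib, ← Finset.mul_sum]
      simp
  exact (Finset.card_le_card hsub).trans (Finset.card_image_le.trans_eq (Finset.card_range _))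

lemma sum_exp_mul_sum_spinVal (n : ℕ) (h : ℝ) :
    ∑ τ : Fin n → Bool, exp (h * ∑ i, spinVal (τ i)) = (2 * cosh h) ^ n := by
  have hsite : ∑ b : Bool, exp (h * spinVal b) = 2 * cosh h := by
    simp [spinVal, cosh_eq]
    ring
  simp only [Finset.mul_sum, exp_sum]
  rw [← Fintype.prod_sum fun (_ : Fin n) (b : Bool) => exp (h * spinVal b), hsite]
  simp

lemma sum_exp_tilt (n : ℕ) (γ x : ℝ) :
    ∑ τ : Fin n → Bool, exp (n * (γ * (x * blockMag τ - x ^ 2 / 2)))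
      = exp (n * curieWeissPotential γ x) := by
  have hsplit (τ : Fin n → Bool) : n * (γ * (x * blockMag τ - x ^ 2 / 2))
      = -(n * (γ * x ^ 2 / 2)) + γ * x * ∑ i, spinVal (τ i) := by
    rw [← natCast_mul_blockMag]
    ring
  have hcosh : 0 < 2 * cosh (γ * x) := mul_pos two_pos (cosh_pos _)
  simp only [hsplit, exp_add, ← Finset.mul_sum, sum_exp_mul_sum_spinVal]
  rw [curieWeissPotential, mul_sub, sub_eq_neg_add, exp_add, exp_nat_mul, exp_log hcosh]

lemma exp_mul_curieWeissPotential_le_sum {γ : ℝ} (hγ : 0 ≤ γ) (n : ℕ) (x : ℝ) :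
    exp (n * curieWeissPotential γ x) ≤ ∑ τ : Fin n → Bool, exp (curieWeissEnergy γ τ) := by
  rw [← sum_exp_tilt]
  gcongr with τ
  unfold curieWeissEnergy
  rw [mul_div_assoc]
  gcongr
  linarith [two_mul_le_add_sq x (blockMag τ)]

lemma sum_indicator_blockMag_eq_le (n : ℕ) (γ y : ℝ) :
    ∑ τ : Fin n → Bool, {τ | blockMag τ = y}.indicator (fun τ => exp (curieWeissEnergy γ τ)) τ
      ≤ exp (n * curieWeissPotential γ y) := by
  rw [← sum_exp_tilt]
  gcongr with τ
  refine indicator_apply_le' (fun hτ : blockMag τ = y => ?_) fun _ => (exp_pos _).le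
  rw [curieWeissEnergy, hτ]
  exact (congrArg exp (by ring)).le

lemma gibbsProb_blockMag_eq_le {γ : ℝ} (hγ : 0 ≤ γ) (n : ℕ) (x y : ℝ) :
    gibbsProb (curieWeissEnergy γ) {τ : Fin n → Bool | blockMag τ = y}
      ≤ exp (n * (curieWeissPotential γ y - curieWeissPotential γ x)) := by
  rw [mul_sub, exp_sub]
  exact div_le_div₀ (exp_pos _).le (sum_indicator_blockMag_eq_le n γ y) (exp_pos _)
    (exp_mul_curieWeissPotential_le_sum hγ n x)

lemma gibbsProb_blockMag_mem_le {γ x ε : ℝ} (hγ : 0 ≤ γ) {A : Set ℝ}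
    (hA : ∀ y ∈ A, |y| ≤ 1 → curieWeissPotential γ y ≤ curieWeissPotential γ x - ε) (n : ℕ) :
    gibbsProb (curieWeissEnergy γ) {τ : Fin n → Bool | blockMag τ ∈ A}
      ≤ (n + 1) * exp (-(n * ε)) := by
  classical
  set F := (Finset.univ.image (blockMag : (Fin n → Bool) → ℝ)).filter (· ∈ A) with hF
  have hcover : {τ : Fin n → Bool | blockMag τ ∈ A} ⊆ ⋃ y ∈ F, {τ | blockMag τ = y} := by
    intro τ (hτ : blockMag τ ∈ A)
    simp [hF, hτ]
  have hterm (y : ℝ) (hy : y ∈ F) :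
      gibbsProb (curieWeissEnergy γ) {τ : Fin n → Bool | blockMag τ = y} ≤ exp (-(n * ε)) := by
    obtain ⟨hmem, hyA⟩ := Finset.mem_filter.1 hy
    obtain ⟨τ, -, rfl⟩ := Finset.mem_image.1 hmem
    refine (gibbsProb_blockMag_eq_le hγ n x _).trans ?_
    rw [← mul_neg]
    gcongr
    linarith [hA _ hyA (abs_blockMag_le_one τ)]
  have hcard : (F.card : ℝ) ≤ n + 1 := by
    exact_mod_cast (Finset.card_filter_le _ _).trans (card_image_blockMag_le n)
  calc gibbsProb (curieWeissEnergy γ) {τ : Fin n → Bool | blockMag τ ∈ A}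
      ≤ ∑ y ∈ F, gibbsProb (curieWeissEnergy γ) {τ : Fin n → Bool | blockMag τ = y} :=
        (gibbsProb_mono _ hcover).trans (gibbsProb_biUnion_le _ _ _)
    _ ≤ F.card • exp (-(n * ε)) := Finset.sum_le_card_nsmul _ _ _ hterm
    _ ≤ (n + 1) * exp (-(n * ε)) := by
        rw [nsmul_eq_mul]
        gcongr

end CurieWeissBlock

section TwoBlocks

variable {n : ℕ}

lemma mag1_eq_blockMag (σ : TwoConf n) : mag1 n σ = blockMag σ.1 := by
  rw [mag1, blockMag, div_mul_cancel_left₀ two_ne_zero, inv_mul_eq_div]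

lemma mag2_eq_blockMag (σ : TwoConf n) : mag2 n σ = blockMag σ.2 := by
  rw [mag2, blockMag, div_mul_cancel_left₀ two_ne_zero, inv_mul_eq_div]

lemma neg_twoH_eq (α β : ℝ) (σ : TwoConf n) :
    -twoH n α β σ = curieWeissEnergy (β / 2) σ.1 + curieWeissEnergy (β / 2) σ.2
      + α * ∑ i, spinVal (σ.1 i) * spinVal (σ.2 i) := by
  have hblock (τ : Fin n → Bool) : curieWeissEnergy (β / 2) τ
      = β / (2 * (2 * n : ℝ)) * ∑ i, ∑ j, spinVal (τ i) * spinVal (τ j) := by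
    rw [← Finset.sum_mul_sum, ← natCast_mul_blockMag, curieWeissEnergy]
    rcases n.eq_zero_or_pos with rfl | hn
    · simp
    · field_simp
  rw [twoH, hblock, hblock]
  ring

lemma abs_sum_spinVal_mul_spinVal_le (σ : TwoConf n) :
    |∑ i, spinVal (σ.1 i) * spinVal (σ.2 i)| ≤ n := by
  refine (Finset.abs_sum_le_sum_abs _ _).trans ?_
  simp [abs_mul, abs_spinVal]

lemma abs_neg_twoH_sub_le (α β : ℝ) (σ : TwoConf n) :
    |-twoH n α β σ - (curieWeissEnergy (β / 2) σ.1 + curieWeissEnergy (β / 2) σ.2)| ≤ |α| * n := by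
  rw [neg_twoH_eq, add_sub_cancel_left, abs_mul]
  gcongr
  exact abs_sum_spinVal_mul_spinVal_le σ

lemma twoMagDist_apply (n : ℕ) (α β : ℝ) (A : Set (ℝ × ℝ)) :
    twoMagDist n α β A = ENNReal.ofReal
      (gibbsProb (fun σ => -twoH n α β σ) {σ | (blockMag σ.1, blockMag σ.2) ∈ A}) := by
  have hZ := sum_exp_pos fun σ : TwoConf n => -twoH n α β σ
  rw [gibbsProb, div_eq_inv_mul, ENNReal.ofReal_mul (by positivity), ENNReal.ofReal_inv_of_pos hZ,
    ENNReal.ofReal_sum_of_nonneg fun _ _ => (exp_pos _).le,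
    ENNReal.ofReal_sum_of_nonneg fun _ _ => indicator_nonneg (fun _ _ => (exp_pos _).le) _,
    twoMagDist, Measure.smul_apply, smul_eq_mul, Measure.finsetSum_apply]
  congr 1
  refine Finset.sum_congr rfl fun σ _ => ?_
  rw [Measure.smul_apply, smul_eq_mul, Measure.dirac_apply, mag1_eq_blockMag, mag2_eq_blockMag]
  by_cases hσ : (blockMag σ.1, blockMag σ.2) ∈ A <;> simp [hσ]

lemma gibbsProb_neg_twoH_le (n : ℕ) (α β : ℝ) (U : Set ℝ) :
    gibbsProb (fun σ => -twoH n α β σ) {σ | ¬ (blockMag σ.1 ∈ U ∧ blockMag σ.2 ∈ U)}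
      ≤ exp (2 * (|α| * n)) *
        (2 * gibbsProb (curieWeissEnergy (β / 2)) {τ : Fin n → Bool | blockMag τ ∈ Uᶜ}) := by
  set B := {τ : Fin n → Bool | blockMag τ ∈ Uᶜ}
  have hcover : {σ : TwoConf n | ¬ (blockMag σ.1 ∈ U ∧ blockMag σ.2 ∈ U)}
      ⊆ Prod.fst ⁻¹' B ∪ Prod.snd ⁻¹' B := fun σ hσ => not_and_or.1 hσ
  refine (gibbsProb_le_exp_mul_gibbsProb (abs_neg_twoH_sub_le α β) _).trans ?_
  gcongr
  refine (gibbsProb_mono _ hcover).trans ((gibbsProb_union_le _ _ _).trans_eq ?_)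
  rw [gibbsProb_preimage_fst, gibbsProb_preimage_snd, two_mul]

lemma exists_twoMagDist_not_memTyp_le {β mp : ℝ} (hβ : 0 < β) (hmp : 0 < mp)
    (hfix : mp = tanh (β / 2 * mp)) :
    ∃ c, 0 < c ∧ ∀ (n : ℕ) (α κ : ℝ), twoMagDist n α β {x | ¬ memTyp mp κ (2 * n) x}
      ≤ ENNReal.ofReal (exp (2 * (|α| * n)) *
        (2 * ((n + 1) * exp (-(n * (c * (((2 * n : ℕ) : ℝ) ^ (-κ)) ^ 2)))))) := by
  obtain ⟨c, hc, hgap⟩ := exists_curieWeissPotential_le_sub (half_pos hβ) hmp hfix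
  refine ⟨c, hc, fun n α κ => ?_⟩
  simp only [twoMagDist_apply, memTyp_iff]
  refine ENNReal.ofReal_le_ofReal ((gibbsProb_neg_twoH_le n α β _).trans ?_)
  gcongr
  exact gibbsProb_blockMag_mem_le (half_pos hβ).le (hgap _ (by positivity)) n

end TwoBlocks

section Asymptotics

lemma isLittleO_rpow_rpow_atTop {p q : ℝ} (hpq : p < q) :
    (fun x : ℝ => x ^ p) =o[atTop] fun x => x ^ q := by
  refine (isLittleO_iff_tendsto' ?_).2 ?_
  · filter_upwards [eventually_gt_atTop 0] with x hx h0
    exact absurd h0 (rpow_pos_of_pos hx q).ne'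
  · refine (tendsto_rpow_neg_atTop (sub_pos.2 hpq)).congr' ?_
    filter_upwards [eventually_gt_atTop 0] with x hx
    rw [neg_sub, rpow_sub hx]

lemma tendsto_mul_exp_neg_mul_rpow_atTop {b s : ℝ} (hb : 0 < b) (hs : 0 < s) :
    Tendsto (fun x : ℝ => x * exp (-b * x ^ s)) atTop (𝓝 0) := by
  refine ((tendsto_rpow_mul_exp_neg_mul_atTop_nhds_zero s⁻¹ b hb).comp
    (tendsto_rpow_atTop hs)).congr' ?_
  filter_upwards [eventually_ge_atTop 0] with x hx
  rw [Function.comp_apply, rpow_rpow_inv hx hs.ne']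

lemma tendsto_two_mul_natCast_atTop : Tendsto (fun n : ℕ => ((2 * n : ℕ) : ℝ)) atTop atTop :=
  tendsto_natCast_atTop_atTop.comp (tendsto_id.const_mul_atTop' two_pos)

lemma tendsto_concentration_bound {α : ℕ → ℝ} {κ c : ℝ} (hc : 0 < c) (hκ : κ < 1 / 2)
    (hα : α =o[atTop] fun n : ℕ => ((2 * n : ℕ) : ℝ) ^ (-(2 * κ))) :
    Tendsto (fun n : ℕ => exp (2 * (|α n| * n)) *
      (2 * ((n + 1) * exp (-(n * (c * (((2 * n : ℕ) : ℝ) ^ (-κ)) ^ 2)))))) atTop (𝓝 0) := by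
  have hlim := ((tendsto_mul_exp_neg_mul_rpow_atTop (b := c / 4) (s := 1 - 2 * κ) (by positivity)
    (by linarith)).const_mul 2).comp tendsto_two_mul_natCast_atTop
  rw [mul_zero] at hlim
  refine squeeze_zero' (Eventually.of_forall fun n => by positivity) ?_ hlim
  filter_upwards [hα.bound (show 0 < c / 4 by positivity), eventually_ge_atTop 1] with n hαn hn
  have hn1 : (1 : ℝ) ≤ n := by exact_mod_cast hn
  have hN0 : (0 : ℝ) < (2 * n : ℕ) := by positivity
  set N : ℝ := ((2 * n : ℕ) : ℝ) with hN
  have hN_eq : N = 2 * n := by push_cast [hN]; ring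
  have hwindow : (N ^ (-κ)) ^ 2 = N ^ (-(2 * κ)) := by
    rw [← rpow_mul_natCast hN0.le]
    congr 1
    push_cast
    ring
  have hpow : N ^ (1 - 2 * κ) = 2 * n * N ^ (-(2 * κ)) := by
    rw [sub_eq_add_neg, rpow_add hN0, rpow_one, hN_eq]
  rw [norm_eq_abs, norm_eq_abs, abs_of_pos (rpow_pos_of_pos hN0 _)] at hαn
  have hexponent : 2 * (|α n| * n) + -(n * (c * (N ^ (-κ)) ^ 2)) ≤ -(c / 4) * N ^ (1 - 2 * κ) := by
    rw [hwindow, hpow]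
    have := mul_le_mul_of_nonneg_right hαn n.cast_nonneg
    linarith
  calc exp (2 * (|α n| * n)) * (2 * ((n + 1) * exp (-(n * (c * (N ^ (-κ)) ^ 2)))))
      = 2 * (n + 1) * exp (2 * (|α n| * n) + -(n * (c * (N ^ (-κ)) ^ 2))) := by
        rw [exp_add]
        ring
    _ ≤ 2 * N * exp (-(c / 4) * N ^ (1 - 2 * κ)) := by
        gcongr
        linarith
    _ = 2 * (N * exp (-(c / 4) * N ^ (1 - 2 * κ))) := by ring

end Asymptotics

theorem gibbs_concentration_on_typical_set_general {β κ : ℝ} (hβ : 2 < β) (hκ : κ < 1 / 2)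
    {α : ℕ → ℝ} (hα : α =o[atTop] fun n : ℕ => ((2 * n : ℕ) : ℝ) ^ (-(2 * κ))) {mp : ℝ}
    (hfix : mp = tanh (β / 2 * mp)) (hmax : ∀ z : ℝ, z = tanh (β / 2 * z) → z ≤ mp) :
    Tendsto (fun n : ℕ => twoMagDist n (α n) β {x : ℝ × ℝ | ¬ memTyp mp κ (2 * n) x})
      atTop (𝓝 0) := by
  obtain ⟨z, hz0, hz⟩ := exists_pos_eq_tanh_mul (show 1 < β / 2 by linarith)
  obtain ⟨c, hc, hbound⟩ :=
    exists_twoMagDist_not_memTyp_le (two_pos.trans hβ) (hz0.trans_le (hmax z hz)) hfix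
  have hlim := ENNReal.tendsto_ofReal (tendsto_concentration_bound hc hκ hα)
  rw [ENNReal.ofReal_zero] at hlim
  exact tendsto_of_tendsto_of_tendsto_of_le_of_le tendsto_const_nhds hlim
    (fun _ => zero_le) fun n => hbound n (α n) κ

/-- Proposition 3.1: for `β > 2`, `α_N = N^{−ρ}` with `ρ > 0`, and `0 < κ < 1/2` with
`2κ < ρ`, the Gibbs measure of the complement of the typical set `A_κ^N` vanishes:
`μ_{N,α_N,β}((m₁, m₂) ∉ A_κ^N) → 0` as `N → ∞` through even integers. -/
theorem gibbs_concentration_on_typical_set (β ρ κ : ℝ) (hβ : 2 < β) (hρ : 0 < ρ)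
    (hκ0 : 0 < κ) (hκhalf : κ < 1 / 2) (hκρ : 2 * κ < ρ) (mp : ℝ)
    (hfix : mp = Real.tanh (β / 2 * mp))
    (hmax : ∀ z : ℝ, z = Real.tanh (β / 2 * z) → z ≤ mp) :
    Tendsto
      (fun n : ℕ =>
        twoMagDist n (((2 * n : ℕ) : ℝ) ^ (-ρ)) β {x : ℝ × ℝ | ¬ memTyp mp κ (2 * n) x})
      atTop (nhds (0 : ENNReal)) :=
  gibbs_concentration_on_typical_set_general hβ hκhalf
    ((isLittleO_rpow_rpow_atTop (by linarith)).comp_tendsto tendsto_two_mul_natCast_atTop) hfix hmax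

end
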